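/- Capacity region of the 3-message index coding problem (1|2), (2|1,3), (3|1). Consider the index coding problem with 3 messages and side information sets A_1 = {2}, A_2 = {1,3}, A_3 = {1}. Its capacity region is exactly the set of tuples (R_1,R_2,R_3) of nonnegative reals satisfying R_1 + R_3 ≤ 1 and R_2 + R_3 ≤ 1. -/

import Mathlib

open Finset Filter

/-- Number of messages at rate `R` and block length `n`: `⌈2^{nR}⌉`. -/
noncomputable def msgCard (n : ℕ) (R : ℝ) : ℕ := ⌈(2 : ℝ) ^ ((n : ℝ) * R)⌉₊

/-- A `(2^{nR_1},…,2^{nR_N}, n)` index code for the index coding problem with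
side information sets `A j`. -/
structure IndexCode (N : ℕ) (A : Fin N → Finset (Fin N)) (R : Fin N → ℝ) (n : ℕ) where
  enc : (∀ j : Fin N, Fin (msgCard n (R j))) → (Fin n → Bool)
  dec : ∀ j : Fin N, (Fin n → Bool) →
    (∀ k : {k : Fin N // k ∈ A j}, Fin (msgCard n (R k.1))) → Fin (msgCard n (R j))

/-- Average probability of error of an index code (messages uniform). -/
noncomputable def IndexCode.Pe {N : ℕ} {A : Fin N → Finset (Fin N)} {R : Fin N → ℝ} {n : ℕ}
    (C : IndexCode N A R n) : ℝ :=
  (Nat.card {m : ∀ j : Fin N, Fin (msgCard n (R j)) //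
      ∃ j : Fin N, C.dec j (C.enc m) (fun k => m k.1) ≠ m j} : ℝ) /
    (Nat.card (∀ j : Fin N, Fin (msgCard n (R j))) : ℝ)

/-- A rate tuple of nonnegative reals is achievable if there is a sequence of codes
whose probability of error tends to zero. -/
def IndexAchievable (N : ℕ) (A : Fin N → Finset (Fin N)) (R : Fin N → ℝ) : Prop :=
  (∀ j, 0 ≤ R j) ∧
    ∃ C : (n : ℕ) → IndexCode N A R n, Tendsto (fun n => (C n).Pe) atTop (nhds 0)

lemma msgCard_pos (n : ℕ) (R : ℝ) : 0 < msgCard n R := by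
  unfold msgCard
  exact Nat.ceil_pos.mpr (by positivity)

lemma le_msgCard (n : ℕ) (R : ℝ) : (2 : ℝ) ^ ((n : ℝ) * R) ≤ (msgCard n R : ℝ) :=
  Nat.le_ceil _

lemma msgCard_le (n : ℕ) (R : ℝ) (hR : 0 ≤ R) :
    (msgCard n R : ℝ) ≤ 2 * (2 : ℝ) ^ ((n : ℝ) * R) := by
  have h1 : (1 : ℝ) ≤ (2 : ℝ) ^ ((n : ℝ) * R) :=
    Real.one_le_rpow (by norm_num) (by positivity)
  have h2 := Nat.ceil_lt_add_one (a := (2 : ℝ) ^ ((n : ℝ) * R)) (by positivity)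
  unfold msgCard
  linarith

/-- A zero error code exists once the encoder separates what has to be decoded. -/
lemma exists_code {N : ℕ} {A : Fin N → Finset (Fin N)} {R : Fin N → ℝ} {n : ℕ}
    (enc : (∀ j : Fin N, Fin (msgCard n (R j))) → (Fin n → Bool))
    (h : ∀ j m m', enc m = enc m' → (∀ k ∈ A j, m k = m' k) → m j = m' j) :
    ∃ C : IndexCode N A R n, C.Pe = 0 := by
  have hd : ∀ (j : Fin N) (x : Fin n → Bool)
      (s : ∀ k : {k : Fin N // k ∈ A j}, Fin (msgCard n (R k.1))),
      ∃ y : Fin (msgCard n (R j)), ∀ m, enc m = x → (∀ k, m k.1 = s k) → m j = y := by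
    intro j x s
    by_cases hx : ∃ m, enc m = x ∧ ∀ k, m k.1 = s k
    · obtain ⟨m, h1, h2⟩ := hx
      exact ⟨m j, fun m' h1' h2' => h j m' m (h1'.trans h1.symm)
        (fun k hk => (h2' ⟨k, hk⟩).trans (h2 ⟨k, hk⟩).symm)⟩
    · exact ⟨⟨0, msgCard_pos _ _⟩, fun m h1 h2 => absurd ⟨m, h1, h2⟩ hx⟩
  choose dec hdec using hd
  refine ⟨⟨enc, dec⟩, ?_⟩
  have he : IsEmpty {m : ∀ j : Fin N, Fin (msgCard n (R j)) //
      ∃ j : Fin N, dec j (enc m) (fun k => m k.1) ≠ m j} :=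
    ⟨fun ⟨m, j, hj⟩ => hj (hdec j _ _ m rfl (fun _ => rfl)).symm⟩
  unfold IndexCode.Pe
  rw [Nat.card_eq_zero.mpr (Or.inl he), Nat.cast_zero, zero_div]

/-- Converse bound for one finite code. -/
lemma code_bound {A : Fin 3 → Finset (Fin 3)} {R : Fin 3 → ℝ} {n : ℕ}
    (C : IndexCode 3 A R n) (a b k : Fin 3)
    (hprod : ∀ f : Fin 3 → ℝ, f a * f b * f k = f 0 * f 1 * f 2)
    (hall : ∀ j, j = a ∨ j = b ∨ j = k)
    (hA : A a ⊆ {k}) (hB : A b ⊆ {k, a}) :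
    1 ≤ C.Pe + ((2 : ℝ) ^ (1 - (R a + R b))) ^ n := by
  classical
  let M := ∀ j : Fin 3, Fin (msgCard n (R j))
  let bad : M → Prop := fun m => ∃ j : Fin 3, C.dec j (C.enc m) (fun k => m k.1) ≠ m j
  have hinj : Function.Injective
      (fun m : {m : M // ¬ bad m} => (C.enc m.1, m.1 k)) := by
    rintro ⟨m, hm⟩ ⟨m', hm'⟩ heq
    simp only [Prod.mk.injEq] at heq
    obtain ⟨h1, h2⟩ := heq
    simp only [bad, not_exists, not_not] at hm hm'
    have ha : m a = m' a := by
      rw [← hm a, ← hm' a, h1]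
      congr 1
      funext ⟨i, hi⟩
      have := hA hi
      simp only [Finset.mem_singleton] at this
      subst this
      exact h2
    have hb : m b = m' b := by
      rw [← hm b, ← hm' b, h1]
      congr 1
      funext ⟨i, hi⟩
      have := hB hi
      simp only [Finset.mem_insert, Finset.mem_singleton] at this
      rcases this with rfl | rfl
      · exact h2
      · exact ha
    apply Subtype.ext
    funext j
    rcases hall j with rfl | rfl | rfl
    · exact ha
    · exact hb
    · exact h2
  have hgood : Nat.card {m : M // ¬ bad m} ≤ 2 ^ n * msgCard n (R k) := by
    have := Nat.card_le_card_of_injective _ hinj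
    simpa [Nat.card_prod] using this
  have hsum : Nat.card {m : M // bad m} + Nat.card {m : M // ¬ bad m} = Nat.card M := by
    rw [← Nat.card_sum]
    exact Nat.card_congr (Equiv.sumCompl bad)
  have hT : (Nat.card M : ℝ) = msgCard n (R a) * msgCard n (R b) * msgCard n (R k) := by
    rw [hprod (fun j => (msgCard n (R j) : ℝ))]
    simp [M, Nat.card_pi, Fin.prod_univ_three]
  have pa : (0 : ℝ) < msgCard n (R a) := by exact_mod_cast msgCard_pos _ _
  have pb : (0 : ℝ) < msgCard n (R b) := by exact_mod_cast msgCard_pos _ _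
  have pk : (0 : ℝ) < msgCard n (R k) := by exact_mod_cast msgCard_pos _ _
  have hTpos : (0 : ℝ) < Nat.card M := by rw [hT]; positivity
  have hPe : C.Pe = (Nat.card {m : M // bad m} : ℝ) / (Nat.card M : ℝ) := rfl
  have hg : (Nat.card {m : M // ¬ bad m} : ℝ) ≤ 2 ^ n * msgCard n (R k) := by
    exact_mod_cast hgood
  have hs : (Nat.card {m : M // bad m} : ℝ) + Nat.card {m : M // ¬ bad m} = Nat.card M := by
    exact_mod_cast hsum
  have hpow : ((2 : ℝ) ^ (1 - (R a + R b))) ^ n *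
      ((2 : ℝ) ^ ((n : ℝ) * R a) * (2 : ℝ) ^ ((n : ℝ) * R b)) = 2 ^ n := by
    rw [← Real.rpow_natCast, ← Real.rpow_mul (by norm_num), ← Real.rpow_add (by norm_num),
      ← Real.rpow_add (by norm_num), ← Real.rpow_natCast]
    congr 1
    ring
  have hMM : (2 : ℝ) ^ ((n : ℝ) * R a) * (2 : ℝ) ^ ((n : ℝ) * R b) ≤
      msgCard n (R a) * msgCard n (R b) :=
    mul_le_mul (le_msgCard _ _) (le_msgCard _ _) (by positivity) pa.le
  have hfin : (Nat.card {m : M // ¬ bad m} : ℝ) ≤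
      ((2 : ℝ) ^ (1 - (R a + R b))) ^ n * Nat.card M := by
    calc _ ≤ 2 ^ n * (msgCard n (R k) : ℝ) := hg
      _ = ((2 : ℝ) ^ (1 - (R a + R b))) ^ n *
        ((2 : ℝ) ^ ((n : ℝ) * R a) * (2 : ℝ) ^ ((n : ℝ) * R b)) * msgCard n (R k) := by rw [hpow]
      _ ≤ ((2 : ℝ) ^ (1 - (R a + R b))) ^ n *
        (msgCard n (R a) * msgCard n (R b)) * msgCard n (R k) := by gcongr
      _ = _ := by rw [hT]; ring
  rw [hPe, div_add' _ _ _ hTpos.ne', le_div_iff₀ hTpos]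
  linarith

lemma converse_bound {A : Fin 3 → Finset (Fin 3)} {R : Fin 3 → ℝ}
    (C : (n : ℕ) → IndexCode 3 A R n) (hC : Tendsto (fun n => (C n).Pe) atTop (nhds 0))
    (a b k : Fin 3)
    (hprod : ∀ f : Fin 3 → ℝ, f a * f b * f k = f 0 * f 1 * f 2)
    (hall : ∀ j, j = a ∨ j = b ∨ j = k)
    (hA : A a ⊆ {k}) (hB : A b ⊆ {k, a}) : R a + R b ≤ 1 := by
  by_contra! hcon
  have hlt : (2 : ℝ) ^ (1 - (R a + R b)) < 1 :=
    Real.rpow_lt_one_of_one_lt_of_neg (by norm_num) (by linarith)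
  have ht := hC.add (tendsto_pow_atTop_nhds_zero_of_lt_one (by positivity) hlt)
  have := ge_of_tendsto' ht (fun n => code_bound (C n) a b k hprod hall hA hB)
  norm_num at this

lemma card_eventually (r s : ℝ) (hr : 0 ≤ r) (hs : 0 ≤ s) (h : r + s < 1) :
    ∀ᶠ n : ℕ in atTop, msgCard n r * msgCard n s ≤ 2 ^ n := by
  have h1 : 1 < (2 : ℝ) ^ (1 - (r + s)) := Real.one_lt_rpow (by norm_num) (by linarith)
  filter_upwards [(tendsto_pow_atTop_atTop_of_one_lt h1).eventually_ge_atTop 4] with n hn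
  have hpow : ((2 : ℝ) ^ (1 - (r + s))) ^ n *
      ((2 : ℝ) ^ ((n : ℝ) * r) * (2 : ℝ) ^ ((n : ℝ) * s)) = 2 ^ n := by
    rw [← Real.rpow_natCast, ← Real.rpow_mul (by norm_num), ← Real.rpow_add (by norm_num),
      ← Real.rpow_add (by norm_num), ← Real.rpow_natCast]
    congr 1
    ring
  have : (msgCard n r : ℝ) * msgCard n s ≤ 2 ^ n := by
    calc (msgCard n r : ℝ) * msgCard n s
        ≤ (2 * (2 : ℝ) ^ ((n : ℝ) * r)) * (2 * (2 : ℝ) ^ ((n : ℝ) * s)) :=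
          mul_le_mul (msgCard_le _ _ hr) (msgCard_le _ _ hs) (by positivity) (by positivity)
      _ = 4 * ((2 : ℝ) ^ ((n : ℝ) * r) * (2 : ℝ) ^ ((n : ℝ) * s)) := by ring
      _ ≤ _ := by rw [← hpow]; gcongr
  exact_mod_cast this

lemma fin_of_zmod {K M : ℕ} (hM : M ≤ K) {x y : Fin M}
    (h : ((x : ℕ) : ZMod K) = ((y : ℕ) : ZMod K)) : x = y := by
  rw [ZMod.natCast_eq_natCast_iff', Nat.mod_eq_of_lt (by omega), Nat.mod_eq_of_lt (by omega)] at h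
  exact Fin.ext h

lemma achievable_code {R : Fin 3 → ℝ} {n : ℕ}
    (h02 : msgCard n (R 0) * msgCard n (R 2) ≤ 2 ^ n)
    (h12 : msgCard n (R 1) * msgCard n (R 2) ≤ 2 ^ n) :
    ∃ C : IndexCode 3 (![({1} : Finset (Fin 3)), {0, 2}, {0}]) R n, C.Pe = 0 := by
  classical
  obtain ⟨K, hK0, hK1, hK⟩ : ∃ K, msgCard n (R 0) ≤ K ∧ msgCard n (R 1) ≤ K ∧
      K * msgCard n (R 2) ≤ 2 ^ n := by
    rcases le_total (msgCard n (R 0)) (msgCard n (R 1)) with h | h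
    · exact ⟨_, h, le_rfl, h12⟩
    · exact ⟨_, le_rfl, h, h02⟩
  have hKpos : 0 < K := lt_of_lt_of_le (msgCard_pos _ _) hK0
  haveI : NeZero K := ⟨hKpos.ne'⟩
  obtain ⟨e⟩ : Nonempty ((ZMod K × Fin (msgCard n (R 2))) ↪ (Fin n → Bool)) := by
    apply Function.Embedding.nonempty_of_card_le
    simpa [ZMod.card] using hK
  apply exists_code (fun m => e (((m 0 : ℕ) : ZMod K) + ((m 1 : ℕ) : ZMod K), m 2))
  intro j m m' he hs
  have he' := e.injective he
  simp only [Prod.mk.injEq] at he'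
  obtain ⟨h1, h2⟩ := he'
  fin_cases j
  · have := hs 1 (by simp)
    rw [this] at h1
    exact fin_of_zmod hK0 (add_right_cancel h1)
  · have := hs 0 (by simp)
    rw [this] at h1
    exact fin_of_zmod hK1 (add_left_cancel h1)
  · exact h2

lemma achievable_of_lt {R : Fin 3 → ℝ} (hR : ∀ j, 0 ≤ R j) (h02 : R 0 + R 2 < 1)
    (h12 : R 1 + R 2 < 1) :
    IndexAchievable 3 (![({1} : Finset (Fin 3)), {0, 2}, {0}]) R := by
  classical
  refine ⟨hR, ?_⟩
  have hne : ∀ n, Nonempty (IndexCode 3 (![({1} : Finset (Fin 3)), {0, 2}, {0}]) R n) :=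
    fun n => ⟨⟨fun _ _ => false, fun j _ _ => ⟨0, msgCard_pos _ _⟩⟩⟩
  refine ⟨fun n => if h : ∃ C : IndexCode 3 (![({1} : Finset (Fin 3)), {0, 2}, {0}]) R n,
    C.Pe = 0 then h.choose else (hne n).some, ?_⟩
  apply tendsto_const_nhds.congr'
  filter_upwards [card_eventually _ _ (hR 0) (hR 2) h02,
    card_eventually _ _ (hR 1) (hR 2) h12] with n h1 h2
  have h := achievable_code h1 h2
  rw [dif_pos h]
  exact h.choose_spec.symm

/-- **Capacity region of the 3-message index coding problem** `(1|2), (2|1,3), (3|1)`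
(with messages 1,2,3 indexed by `0,1,2 : Fin 3`): the capacity region equals the set of
nonnegative rate tuples satisfying `R₁+R₃ ≤ 1` and `R₂+R₃ ≤ 1`. -/
theorem capacity_region_three_message_example :
    closure {R : Fin 3 → ℝ |
        IndexAchievable 3 (![({1} : Finset (Fin 3)), {0, 2}, {0}]) R} =
      {R : Fin 3 → ℝ | (∀ j, 0 ≤ R j) ∧ R 0 + R 2 ≤ 1 ∧ R 1 + R 2 ≤ 1} := by
  apply Set.Subset.antisymm
  · apply closure_minimal
    · rintro R ⟨h0, C, hC⟩
      refine ⟨h0, ?_, ?_⟩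
      · exact converse_bound C hC 0 2 1 (fun f => by ring) (by decide) (by simp) (by simp)
      · rw [add_comm]
        exact converse_bound C hC 2 1 0 (fun f => by ring) (by decide) (by simp) (by simp)
    · have e : {R : Fin 3 → ℝ | (∀ j, 0 ≤ R j) ∧ R 0 + R 2 ≤ 1 ∧ R 1 + R 2 ≤ 1} =
          (⋂ j, {R : Fin 3 → ℝ | 0 ≤ R j}) ∩
            ({R : Fin 3 → ℝ | R 0 + R 2 ≤ 1} ∩ {R : Fin 3 → ℝ | R 1 + R 2 ≤ 1}) := by
        ext R; simp
      rw [e]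
      refine (isClosed_iInter fun j => isClosed_le (by fun_prop) (by fun_prop)).inter
        ((isClosed_le (by fun_prop) (by fun_prop)).inter
          (isClosed_le (by fun_prop) (by fun_prop)))
  · rintro R ⟨h0, h1, h2⟩
    have ht : Tendsto (fun k : ℕ => (1 - 1 / ((k : ℝ) + 1)) • R) atTop (nhds R) := by
      have := (tendsto_const_nhds (x := (1 : ℝ))).sub
        (tendsto_one_div_add_atTop_nhds_zero_nat (𝕜 := ℝ))
      simpa using this.smul_const R
    refine mem_closure_of_tendsto ht (Eventually.of_forall fun k => ?_)
    have hk : 0 < 1 / ((k : ℝ) + 1) := by positivity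
    have hk' : 1 / ((k : ℝ) + 1) ≤ 1 := by
      rw [div_le_one (by positivity)]
      linarith [(Nat.cast_nonneg k : (0 : ℝ) ≤ k)]
    have key : ∀ x : ℝ, x ≤ 1 → (1 - 1 / ((k : ℝ) + 1)) * x < 1 := fun x hx => by
      nlinarith
    apply achievable_of_lt
    · intro j
      exact mul_nonneg (by linarith) (h0 j)
    · have := key _ h1
      simp only [Pi.smul_apply, smul_eq_mul]
      linarith
    · have := key _ h2
      simp only [Pi.smul_apply, smul_eq_mul]
      linarith
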